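/- For any k quaternion matrices H₁,…,H_k with H_j of dimensions n_j × n_{j+1}, the diamond product satisfies ‖H₁ ⋄ ⋯ ⋄ H_k‖₂ ≤ 3^{k−1} · ‖H₁‖₂ ⋯ ‖H_k‖₂. -/

import Mathlib

open scoped Quaternion Matrix
open MeasureTheory Filter Topology

noncomputable section

/-- The standard representation of a real quaternion `q = a + b·i + c·j + d·k` as the
`2 × 2` complex matrix `[[a+bi, c+di], [−c+di, a−bi]]`. -/
def quatToC2 (q : ℍ[ℝ]) : Matrix (Fin 2) (Fin 2) ℂ :=
  !![(q.re : ℂ) + q.imI * Complex.I, (q.imJ : ℂ) + q.imK * Complex.I;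
     (-q.imJ : ℂ) + q.imK * Complex.I, (q.re : ℂ) - q.imI * Complex.I]

/-- Entrywise complex representation `ψ` of a quaternion matrix: a `p × n` quaternion
matrix becomes a `2p × 2n` complex matrix. -/
def psi {p n : ℕ} (A : Matrix (Fin p) (Fin n) ℍ[ℝ]) :
    Matrix (Fin p × Fin 2) (Fin n × Fin 2) ℂ :=
  fun i j => quatToC2 (A i.1 j.1) i.2 j.2

/-- The 2-norm of a quaternion matrix: the L2 operator norm (i.e. the largest singular
value) of its complex representation `ψ(A)`. -/
def quatNorm2 {p n : ℕ} (A : Matrix (Fin p) (Fin n) ℍ[ℝ]) : ℝ :=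
  ‖LinearMap.toContinuousLinearMap (Matrix.toEuclideanLin (psi A))‖

/-- The increasingly ordered eigenvalues of a Hermitian complex matrix (junk value `0`
if the matrix is not Hermitian). -/
def sortedEigs {m : Type*} [Fintype m] [DecidableEq m] (M : Matrix m m ℂ) :
    Fin (Fintype.card m) → ℝ :=
  if h : M.IsHermitian then
    (h.eigenvalues ∘ (Fintype.equivFin m).symm) ∘
      Tuple.sort (h.eigenvalues ∘ (Fintype.equivFin m).symm)
  else 0

/-- `quatEig A k` is the `k`-th smallest eigenvalue (0-indexed) of a `p × p` quaternion
matrix `A` with `ψ(A)` Hermitian: the eigenvalues of `ψ(A)` come in coincident pairs, and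
we take one from each pair, i.e. every other entry of the increasingly sorted list of the
`2p` eigenvalues of `ψ(A)`. -/
def quatEig {p : ℕ} (A : Matrix (Fin p) (Fin p) ℍ[ℝ]) (k : Fin p) : ℝ :=
  sortedEigs (psi A) ⟨2 * k.val, by
    have h : Fintype.card (Fin p × Fin 2) = p * 2 := by simp
    have hk := k.isLt
    omega⟩

/-- `quatEigIdx A k` is `s_{k+1}(A)`, the `(k+1)`-st smallest eigenvalue of the quaternion
matrix `A` (0-indexed; junk value `0` if `k ≥ p`). -/
def quatEigIdx {p : ℕ} (A : Matrix (Fin p) (Fin p) ℍ[ℝ]) (k : ℕ) : ℝ :=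
  if h : k < p then quatEig A ⟨k, h⟩ else 0

open Classical in
/-- The diamond product `H₁ ⋄ ⋯ ⋄ H_k` of quaternion matrices `H j` of dimensions
`dims j × dims (j+1)`: its `(α, β)` entry is
`Σ h⁽¹⁾_{α t₂} h⁽²⁾_{t₂ t₃} ⋯ h⁽ᵏ⁾_{t_k β}`, the sum running over all
`t_j ∈ {1,…,dims j}` (with `t₁ = α`, `t_{k+1} = β`) subject to the restrictions
`t₁ ≠ t₃, t₂ ≠ t₄, …, t_{k−1} ≠ t_{k+1}`.  The whole chain `t₁, …, t_{k+1}` is encoded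
as a dependent function `t : (j : Fin (k+1)) → Fin (dims j)`, and indices in different
index sets are compared through their values. -/
def diamond {k : ℕ} (dims : Fin (k + 1) → ℕ)
    (H : (j : Fin k) → Matrix (Fin (dims j.castSucc)) (Fin (dims j.succ)) ℍ[ℝ]) :
    Matrix (Fin (dims 0)) (Fin (dims (Fin.last k))) ℍ[ℝ] :=
  fun α β =>
    ∑ t ∈ Finset.univ.filter
      (fun t : (j : Fin (k + 1)) → Fin (dims j) =>
        t 0 = α ∧ t (Fin.last k) = β ∧
        ∀ i : Fin (k + 1), ∀ h : i.val + 2 < k + 1,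
          (t i).val ≠ (t ⟨i.val + 2, h⟩).val),
      (List.ofFn (fun j : Fin k => H j (t j.castSucc) (t j.succ))).prod

/-!
Let `M ⋄ (H₁, …, H_k)` be the diamond product of `M, H₁, …, H_k`. Dropping the restriction
`t₁ ≠ t₃` gives `M * (H₁ ⋄ ⋯ ⋄ H_k)`. The surplus paths, those with `t₃ = t₁`, contribute
`D * (H₂ ⋄ ⋯ ⋄ H_k)` with `D` the diagonal part of `M * H₁`, except that here `t₂ ≠ t₄` is no
longer imposed; the paths with `t₃ = t₁` and `t₄ = t₂` are therefore added back, and they form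
`T ⋄ (H₃, …, H_k)` with `T a b = M a b * H₁ b a * H₂ a b`. Hence
`M ⋄ (H₁, …, H_k) = M * (H₁ ⋄ ⋯ ⋄ H_k) - D * (H₂ ⋄ ⋯ ⋄ H_k) + T ⋄ (H₃, …, H_k)`.
By the Schur test `‖D‖ ≤ ‖M‖ ‖H₁‖` and `‖T‖ ≤ ‖M‖ ‖H₁‖ ‖H₂‖`, so a constant `c_k` for products
of `k` factors is obtained from `c_{k+2} = c_{k+1} + 2 c_k`, `c₁ = 1`, `c₂ = 2`, that is,
`c_k = 2 ^ (k - 1)`.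
-/

theorem sum_sq_norm_sum_le_of_schur {ι κ E : Type*} [Fintype ι] [Fintype κ]
    [SeminormedAddCommGroup E] {u : ι → κ → E} {x y : ι → κ → ℝ} {r : κ → ℝ} {X Y : ℝ}
    (hu : ∀ a b, ‖u a b‖ ≤ x a b * (y a b * r b))
    (hx : ∀ a, ∑ b, x a b ^ 2 ≤ X ^ 2) (hy : ∀ b, ∑ a, y a b ^ 2 ≤ Y ^ 2) :
    ∑ a, ‖∑ b, u a b‖ ^ 2 ≤ (X * Y) ^ 2 * ∑ b, r b ^ 2 := by
  have row_le (a : ι) : ‖∑ b, u a b‖ ^ 2 ≤ X ^ 2 * ∑ b, y a b ^ 2 * r b ^ 2 :=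
    calc ‖∑ b, u a b‖ ^ 2
        ≤ (∑ b, x a b * (y a b * r b)) ^ 2 := by
          gcongr
          exact norm_sum_le_of_le _ fun b _ => hu a b
      _ ≤ (∑ b, x a b ^ 2) * ∑ b, (y a b * r b) ^ 2 := Finset.sum_mul_sq_le_sq_mul_sq _ _ _
      _ ≤ X ^ 2 * ∑ b, y a b ^ 2 * r b ^ 2 := by
          simp only [mul_pow]
          gcongr
          exact hx a
  calc ∑ a, ‖∑ b, u a b‖ ^ 2
      ≤ ∑ a, X ^ 2 * ∑ b, y a b ^ 2 * r b ^ 2 := Finset.sum_le_sum fun a _ => row_le a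
    _ = X ^ 2 * ∑ b, (∑ a, y a b ^ 2) * r b ^ 2 := by
        simp only [← Finset.mul_sum, Finset.sum_mul]
        rw [Finset.sum_comm]
    _ ≤ X ^ 2 * ∑ b, Y ^ 2 * r b ^ 2 := by
        gcongr with b
        exact hy b
    _ = (X * Y) ^ 2 * ∑ b, r b ^ 2 := by rw [← Finset.mul_sum]; ring

section ComplexRepresentation

/-- The representation `quatToC2` of quaternions by complex matrices, as a ring homomorphism. -/
def quatToC2Hom : ℍ[ℝ] →+* Matrix (Fin 2) (Fin 2) ℂ where
  toFun := quatToC2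
  map_one' := by ext i j; fin_cases i <;> fin_cases j <;> simp [quatToC2]
  map_zero' := by ext i j; fin_cases i <;> fin_cases j <;> simp [quatToC2]
  map_add' p q := by
    ext i j
    fin_cases i <;> fin_cases j <;> simp [quatToC2, Complex.ext_iff] <;> ring
  map_mul' p q := by
    ext i j
    fin_cases i <;> fin_cases j <;>
      simp [quatToC2, Matrix.mul_apply, Complex.ext_iff] <;> constructor <;> ring

theorem quatToC2_star (q : ℍ[ℝ]) : quatToC2 (star q) = (quatToC2 q)ᴴ := by
  ext i j
  fin_cases i <;> fin_cases j <;> simp [quatToC2]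

theorem norm_toLp_quatToC2_mulVec (q : ℍ[ℝ]) (w : Fin 2 → ℂ) :
    ‖WithLp.toLp 2 (quatToC2 q *ᵥ w)‖ = ‖q‖ * ‖WithLp.toLp 2 w‖ := by
  have norm_sq_quaternion : ‖q‖ ^ 2 = q.re ^ 2 + q.imI ^ 2 + q.imJ ^ 2 + q.imK ^ 2 := by
    rw [sq, ← Quaternion.normSq_eq_norm_mul_self, Quaternion.normSq_def']
  rw [← sq_eq_sq₀ (by positivity) (by positivity), mul_pow, norm_sq_quaternion,
    EuclideanSpace.norm_sq_eq, EuclideanSpace.norm_sq_eq]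
  simp only [Fin.sum_univ_two, Matrix.mulVec, dotProduct, ← Complex.normSq_eq_norm_sq,
    Complex.normSq_apply]
  simp only [quatToC2, Fin.isValue, Matrix.of_apply, Matrix.cons_val', Matrix.cons_val_zero,
    Matrix.cons_val_fin_one, Matrix.cons_val_one, Complex.add_re, Complex.mul_re,
    Complex.ofReal_re, Complex.I_re, mul_zero, Complex.ofReal_im, Complex.I_im, mul_one,
    sub_self, add_zero, Complex.add_im, Complex.mul_im, zero_add, Complex.neg_re, neg_mul,
    Complex.neg_im, neg_zero, Complex.sub_re, sub_zero, Complex.sub_im, zero_sub, sub_neg_eq_add]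
  ring

variable {m n p : ℕ}

theorem psi_mul (A : Matrix (Fin m) (Fin n) ℍ[ℝ]) (B : Matrix (Fin n) (Fin p) ℍ[ℝ]) :
    psi (A * B) = psi A * psi B := by
  ext i j
  have entry_mul : quatToC2 ((A * B) i.1 j.1) =
      ∑ b, quatToC2 (A i.1 b) * quatToC2 (B b j.1) := by
    rw [Matrix.mul_apply]
    exact (map_sum quatToC2Hom _ _).trans
      (Finset.sum_congr rfl fun b _ => map_mul quatToC2Hom _ _)
  rw [psi, entry_mul]
  simp only [psi, Matrix.mul_apply, Matrix.sum_apply, Fintype.sum_prod_type]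

theorem psi_add (A B : Matrix (Fin m) (Fin n) ℍ[ℝ]) : psi (A + B) = psi A + psi B :=
  Matrix.ext fun i j => congrFun₂ (map_add quatToC2Hom (A i.1 j.1) (B i.1 j.1)) i.2 j.2

theorem psi_sub (A B : Matrix (Fin m) (Fin n) ℍ[ℝ]) : psi (A - B) = psi A - psi B :=
  Matrix.ext fun i j => congrFun₂ (map_sub quatToC2Hom (A i.1 j.1) (B i.1 j.1)) i.2 j.2

theorem psi_conjTranspose (A : Matrix (Fin m) (Fin n) ℍ[ℝ]) : psi Aᴴ = (psi A)ᴴ :=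
  Matrix.ext fun i j => congrFun₂ (quatToC2_star (A j.1 i.1)) i.2 j.2

theorem norm_sq_toEuclideanLin_psi (A : Matrix (Fin m) (Fin n) ℍ[ℝ])
    (v : EuclideanSpace ℂ (Fin n × Fin 2)) :
    ‖Matrix.toEuclideanLin (psi A) v‖ ^ 2 =
      ∑ a, ‖∑ b, WithLp.toLp 2 (quatToC2 (A a b) *ᵥ fun s => v (b, s))‖ ^ 2 := by
  simp only [EuclideanSpace.norm_sq_eq, Fintype.sum_prod_type]
  refine Finset.sum_congr rfl fun a _ => Finset.sum_congr rfl fun s _ => ?_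
  simp only [Matrix.toLpLin_apply, Matrix.mulVec, dotProduct, psi, Fintype.sum_prod_type,
    WithLp.ofLp_sum, Finset.sum_apply]

end ComplexRepresentation

section QuatNorm

variable {m n p : ℕ}

theorem quatNorm2_nonneg (A : Matrix (Fin m) (Fin n) ℍ[ℝ]) : 0 ≤ quatNorm2 A :=
  norm_nonneg _

open scoped Matrix.Norms.L2Operator in
theorem quatNorm2_eq_norm_psi (A : Matrix (Fin m) (Fin n) ℍ[ℝ]) : quatNorm2 A = ‖psi A‖ :=
  rfl

theorem quatNorm2_mul_le (A : Matrix (Fin m) (Fin n) ℍ[ℝ]) (B : Matrix (Fin n) (Fin p) ℍ[ℝ]) :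
    quatNorm2 (A * B) ≤ quatNorm2 A * quatNorm2 B := by
  simp only [quatNorm2_eq_norm_psi, psi_mul]
  exact Matrix.l2_opNorm_mul _ _

open scoped Matrix.Norms.L2Operator in
theorem quatNorm2_add_le (A B : Matrix (Fin m) (Fin n) ℍ[ℝ]) :
    quatNorm2 (A + B) ≤ quatNorm2 A + quatNorm2 B := by
  simp only [quatNorm2_eq_norm_psi, psi_add]
  exact norm_add_le _ _

open scoped Matrix.Norms.L2Operator in
theorem quatNorm2_sub_le (A B : Matrix (Fin m) (Fin n) ℍ[ℝ]) :
    quatNorm2 (A - B) ≤ quatNorm2 A + quatNorm2 B := by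
  simp only [quatNorm2_eq_norm_psi, psi_sub]
  exact norm_sub_le _ _

theorem quatNorm2_conjTranspose (A : Matrix (Fin m) (Fin n) ℍ[ℝ]) :
    quatNorm2 Aᴴ = quatNorm2 A := by
  simp only [quatNorm2_eq_norm_psi, psi_conjTranspose]
  exact Matrix.l2_opNorm_conjTranspose _

theorem sum_sq_norm_col_le_quatNorm2_sq (A : Matrix (Fin m) (Fin n) ℍ[ℝ]) (b : Fin n) :
    ∑ a, ‖A a b‖ ^ 2 ≤ quatNorm2 A ^ 2 := by
  let v : EuclideanSpace ℂ (Fin n × Fin 2) := EuclideanSpace.single (b, 0) 1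
  have hv : ‖v‖ = 1 := by simp [v]
  have block_single (c : Fin n) : (fun s => v (c, s)) = if c = b then Pi.single 0 1 else 0 := by
    ext s
    by_cases hc : c = b <;> simp [v, hc, Pi.single_apply]
  have apply_sq : ‖Matrix.toEuclideanLin (psi A) v‖ ^ 2 = ∑ a, ‖A a b‖ ^ 2 := by
    rw [norm_sq_toEuclideanLin_psi]
    refine Finset.sum_congr rfl fun a _ => ?_
    rw [Finset.sum_eq_single b (fun c _ hc => by simp [block_single, hc]) (by simp),
      norm_toLp_quatToC2_mulVec, block_single, if_pos rfl]
    simp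
  rw [← apply_sq]
  gcongr
  simpa only [hv, mul_one, quatNorm2, LinearMap.coe_toContinuousLinearMap'] using
    (LinearMap.toContinuousLinearMap (Matrix.toEuclideanLin (psi A))).le_opNorm v

theorem sum_sq_norm_row_le_quatNorm2_sq (A : Matrix (Fin m) (Fin n) ℍ[ℝ]) (a : Fin m) :
    ∑ b, ‖A a b‖ ^ 2 ≤ quatNorm2 A ^ 2 := by
  simpa [quatNorm2_conjTranspose] using sum_sq_norm_col_le_quatNorm2_sq Aᴴ a

theorem norm_entry_le_quatNorm2 (A : Matrix (Fin m) (Fin n) ℍ[ℝ]) (a : Fin m) (b : Fin n) :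
    ‖A a b‖ ≤ quatNorm2 A := by
  refine le_of_sq_le_sq ?_ (quatNorm2_nonneg A)
  exact (Finset.single_le_sum (f := fun b => ‖A a b‖ ^ 2) (fun _ _ => by positivity)
    (Finset.mem_univ b)).trans (sum_sq_norm_row_le_quatNorm2_sq A a)

theorem quatNorm2_le_of_schur {K : Matrix (Fin m) (Fin n) ℍ[ℝ]} {x y : Fin m → Fin n → ℝ}
    {X Y : ℝ} (hX : 0 ≤ X) (hY : 0 ≤ Y) (hK : ∀ a b, ‖K a b‖ ≤ x a b * y a b)
    (hx : ∀ a, ∑ b, x a b ^ 2 ≤ X ^ 2) (hy : ∀ b, ∑ a, y a b ^ 2 ≤ Y ^ 2) :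
    quatNorm2 K ≤ X * Y := by
  refine ContinuousLinearMap.opNorm_le_bound _ (by positivity) fun v => ?_
  refine le_of_sq_le_sq ?_ (by positivity)
  have norm_sq_v : ‖v‖ ^ 2 = ∑ b, ‖WithLp.toLp 2 fun s => v (b, s)‖ ^ 2 := by
    simp only [EuclideanSpace.norm_sq_eq, Fintype.sum_prod_type]
  rw [LinearMap.coe_toContinuousLinearMap', norm_sq_toEuclideanLin_psi, mul_pow, norm_sq_v]
  refine sum_sq_norm_sum_le_of_schur (fun a b => ?_) hx hy
  rw [norm_toLp_quatToC2_mulVec, ← mul_assoc]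
  gcongr
  exact hK a b

end QuatNorm

section DiagonalPart

variable {m n p q : ℕ}

/-- The diagonal part of a rectangular matrix: the entries whose row and column index have the
same value are kept, all others are replaced by `0`. -/
def diagonalPart {R : Type*} [Zero R] (A : Matrix (Fin m) (Fin n) R) :
    Matrix (Fin m) (Fin n) R :=
  Matrix.of fun a b => if (a : ℕ) = b then A a b else 0

/-- The matrix `(a, d) ↦ A a d * B d a * C a d` of the walks `a → d → a → d`. The factors are
rectangular, so the inner indices are summed over, constrained to have the values of `d` and `a`;
the entry is `0` when `d` or `a` is out of range. -/
def backtrackMatrix {R : Type*} [NonUnitalNonAssocSemiring R] (A : Matrix (Fin m) (Fin n) R)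
    (B : Matrix (Fin n) (Fin p) R) (C : Matrix (Fin p) (Fin q) R) : Matrix (Fin m) (Fin q) R :=
  Matrix.of fun a d =>
    ∑ b with Fin.val b = d, ∑ c with Fin.val c = a, A a b * B b c * C c d

theorem diagonalPart_mul_mul_apply {R : Type*} [NonUnitalSemiring R]
    (A : Matrix (Fin m) (Fin n) R) (B : Matrix (Fin n) (Fin p) R) (C : Matrix (Fin p) (Fin q) R)
    (a : Fin m) (d : Fin q) :
    (diagonalPart (A * B) * C) a d = ∑ b, ∑ c with Fin.val c = a, A a b * B b c * C c d := by
  have entry (c : Fin p) : diagonalPart (A * B) a c * C c d =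
      if Fin.val c = a then ∑ b, A a b * B b c * C c d else 0 := by
    simp only [diagonalPart, Matrix.of_apply, Matrix.mul_apply, ite_mul, zero_mul, Finset.sum_mul,
      eq_comm]
  rw [Matrix.mul_apply]
  simp only [entry, ← Finset.sum_filter]
  exact Finset.sum_comm

theorem sum_filter_val_eq {M : Type*} [AddCommMonoid M] (f : Fin n → M) (i : ℕ) :
    ∑ b with Fin.val b = i, f b = if h : i < n then f ⟨i, h⟩ else 0 := by
  split_ifs with h
  · rw [Finset.sum_filter, Finset.sum_eq_single_of_mem ⟨i, h⟩ (Finset.mem_univ _)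
      (fun b _ hb => if_neg fun hbi => hb (Fin.ext hbi)), if_pos rfl]
  · exact Finset.sum_eq_zero fun b hb => by
      have := (Finset.mem_filter.1 hb).2
      omega

theorem sum_filter_val_eq_const_le {c : ℝ} (hc : 0 ≤ c) (i : ℕ) :
    ∑ b : Fin n with Fin.val b = i, c ≤ c := by
  rw [sum_filter_val_eq]
  split_ifs <;> simp [hc]

theorem sum_sq_sum_filter_val_eq_le (f : Fin n → ℝ) :
    ∑ d : Fin q, (∑ b with Fin.val b = d, f b) ^ 2 ≤ ∑ b, f b ^ 2 := by
  calc ∑ d : Fin q, (∑ b with Fin.val b = d, f b) ^ 2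
      = ∑ d : Fin q, ∑ b with Fin.val b = d, f b ^ 2 := by
        refine Finset.sum_congr rfl fun d _ => ?_
        simp only [sum_filter_val_eq]
        split_ifs <;> simp
    _ = ∑ b : Fin n, ∑ d : Fin q with Fin.val d = b, f b ^ 2 := by
        simp only [Finset.sum_filter]
        rw [Finset.sum_comm]
        simp only [eq_comm]
    _ ≤ ∑ b, f b ^ 2 := Finset.sum_le_sum fun b _ => sum_filter_val_eq_const_le (sq_nonneg _) _

theorem quatNorm2_diagonalPart_le (A : Matrix (Fin m) (Fin n) ℍ[ℝ]) :
    quatNorm2 (diagonalPart A) ≤ quatNorm2 A := by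
  rw [← mul_one (quatNorm2 A)]
  refine quatNorm2_le_of_schur (x := fun a b => if Fin.val b = a then quatNorm2 A else 0)
    (y := fun a b => if Fin.val a = b then 1 else 0) (quatNorm2_nonneg A) zero_le_one ?_ ?_ ?_
  · intro a b
    by_cases hab : (a : ℕ) = b
    · simpa [diagonalPart, hab] using norm_entry_le_quatNorm2 A a b
    · simp [diagonalPart, hab]
  · intro a
    simpa only [ite_pow, ne_eq, OfNat.ofNat_ne_zero, not_false_eq_true, zero_pow,
      Finset.sum_filter] using
      sum_filter_val_eq_const_le (n := n) (sq_nonneg (quatNorm2 A)) a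
  · intro b
    simpa only [ite_pow, one_pow, ne_eq, OfNat.ofNat_ne_zero, not_false_eq_true, zero_pow,
      Finset.sum_filter] using sum_filter_val_eq_const_le (n := m) zero_le_one b

theorem quatNorm2_backtrackMatrix_le (A : Matrix (Fin m) (Fin n) ℍ[ℝ])
    (B : Matrix (Fin n) (Fin p) ℍ[ℝ]) (C : Matrix (Fin p) (Fin q) ℍ[ℝ]) :
    quatNorm2 (backtrackMatrix A B C) ≤ quatNorm2 A * quatNorm2 B * quatNorm2 C := by
  have hB := quatNorm2_nonneg B
  refine quatNorm2_le_of_schur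
    (x := fun a d => (∑ b with Fin.val b = d, ‖A a b‖) * quatNorm2 B)
    (y := fun a d => ∑ c with Fin.val c = a, ‖C c d‖)
    (mul_nonneg (quatNorm2_nonneg A) hB) (quatNorm2_nonneg C) ?_ ?_ ?_
  · intro a d
    rw [backtrackMatrix, Matrix.of_apply, Finset.sum_mul, Finset.sum_mul_sum]
    refine norm_sum_le_of_le _ fun b _ => norm_sum_le_of_le _ fun c _ => ?_
    rw [norm_mul, norm_mul]
    gcongr
    exact norm_entry_le_quatNorm2 B b c
  · intro a
    simp only [mul_pow, ← Finset.sum_mul]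
    gcongr
    exact (sum_sq_sum_filter_val_eq_le _).trans (sum_sq_norm_row_le_quatNorm2_sq A a)
  · exact fun d => (sum_sq_sum_filter_val_eq_le _).trans (sum_sq_norm_col_le_quatNorm2_sq C d)

end DiagonalPart

section IndexChain

variable {k : ℕ}

/-- A chain of indices is admissible if no index has the same value as the one two steps later,
and the value of the second index, if there is one, avoids `F`. For `F = {v}` the chain may be
preceded by an index of value `v`. -/
def AdmissibleChain {dims : Fin (k + 1) → ℕ} (F : Finset ℕ)
    (t : (j : Fin (k + 1)) → Fin (dims j)) : Prop :=
  (∀ h : 1 < k + 1, (t ⟨1, h⟩).val ∉ F) ∧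
    ∀ i : Fin (k + 1), ∀ h : i.val + 2 < k + 1, (t i).val ≠ (t ⟨i.val + 2, h⟩).val

theorem admissibleChain_cons_iff {dims : Fin (k + 2) → ℕ} {F : Finset ℕ} {a : Fin (dims 0)}
    {s : (j : Fin (k + 1)) → Fin (dims j.succ)} :
    AdmissibleChain F (Fin.cons a s : (j : Fin (k + 2)) → Fin (dims j)) ↔
      (s 0).val ∉ F ∧ AdmissibleChain (dims := fun j => dims j.succ) {a.val} s := by
  unfold AdmissibleChain
  rw [Fin.forall_fin_succ]
  refine and_congr ⟨fun h => h (by omega), fun h _ => h⟩ (and_congr ?_ ?_)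
  · simp only [Finset.mem_singleton]
    exact ⟨fun h hk => (h (by simpa using hk)).symm, fun h hk => Ne.symm (h (by simpa using hk))⟩
  · exact forall_congr' fun i =>
      ⟨fun h hi => h (by simpa using hi), fun h hi => h (by simpa using hi)⟩

theorem sum_filter_apply_zero_eq_and {ι : Fin (k + 1) → Type*} [∀ j, Fintype (ι j)]
    [DecidableEq (ι 0)] {M : Type*} [AddCommMonoid M] (a : ι 0)
    (P : ((j : Fin (k + 1)) → ι j) → Prop) [DecidablePred P] (f : ((j : Fin (k + 1)) → ι j) → M) :
    ∑ t with t 0 = a ∧ P t, f t =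
      ∑ s : (j : Fin k) → ι j.succ with P (Fin.cons a s), f (Fin.cons a s) := by
  simp only [Finset.sum_filter, ite_and]
  rw [← Fintype.sum_equiv (Fin.consEquiv ι) _ _ (fun _ => rfl), Fintype.sum_prod_type]
  simp only [Fin.consEquiv, Equiv.coe_fn_mk, Fin.cons_zero, Finset.sum_ite_irrel,
    Finset.sum_const_zero, Finset.sum_ite_eq', Finset.mem_univ, if_true]
  rfl

end IndexChain

/-- Finite sequences of matrices over `R` whose dimensions match, so that they can be multiplied.
`MatrixChain R m n` consists of the sequences whose product is an `m × n` matrix. -/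
inductive MatrixChain (R : Type*) : ℕ → ℕ → Type _
  | nil (n : ℕ) : MatrixChain R n n
  | cons {l m n : ℕ} (A : Matrix (Fin l) (Fin m) R) (L : MatrixChain R m n) : MatrixChain R l n

namespace MatrixChain

section PathSum

variable {R : Type*} [Semiring R]

/-- The sum of the weights `A₁ t₁ t₂ * A₂ t₂ t₃ * ⋯` over all index sequences `t` with prescribed
end points such that `tᵢ` and `tᵢ₊₂` never have the same value and the value of `t₂` avoids `F`.
Taking `F = ∅` gives the diamond product, and `F = {v}` accounts for a preceding index `t₀ = v`. -/
def pathSum : {m n : ℕ} → MatrixChain R m n → Finset ℕ → Matrix (Fin m) (Fin n) R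
  | _, _, nil _, _ => 1
  | _, _, cons A L, F =>
    Matrix.of fun a β => ∑ b with Fin.val b ∉ F, A a b * L.pathSum {a.val} b β

variable {l m n : ℕ}

theorem pathSum_cons_apply (A : Matrix (Fin l) (Fin m) R) (L : MatrixChain R m n) (F : Finset ℕ)
    (a : Fin l) (β : Fin n) :
    (cons A L).pathSum F a β = ∑ b with Fin.val b ∉ F, A a b * L.pathSum {a.val} b β :=
  rfl

theorem pathSum_cons_empty_apply (A : Matrix (Fin l) (Fin m) R) (L : MatrixChain R m n)
    (a : Fin l) (β : Fin n) :
    (cons A L).pathSum ∅ a β = ∑ b, A a b * L.pathSum {a.val} b β := by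
  simp [pathSum_cons_apply]

theorem pathSum_cons_nil_empty (A : Matrix (Fin m) (Fin n) R) : (cons A (nil n)).pathSum ∅ = A := by
  ext a β
  simp [pathSum, Matrix.one_apply]

end PathSum

section Recursion

variable {R : Type*} [Ring R] {l m n p q : ℕ}

theorem pathSum_cons_singleton_apply (A : Matrix (Fin l) (Fin m) R) (L : MatrixChain R m n)
    (v : ℕ) (a : Fin l) (β : Fin n) :
    (cons A L).pathSum {v} a β = (cons A L).pathSum ∅ a β -
      ∑ b with Fin.val b = v, A a b * L.pathSum {a.val} b β := by
  rw [pathSum_cons_empty_apply, pathSum_cons_apply, eq_sub_iff_add_eq']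
  simp only [Finset.mem_singleton]
  exact Finset.sum_filter_add_sum_filter_not _ _ _

theorem pathSum_cons_cons_empty_apply (A : Matrix (Fin l) (Fin m) R)
    (B : Matrix (Fin m) (Fin n) R) (L : MatrixChain R n p) (a : Fin l) (β : Fin p) :
    (cons A (cons B L)).pathSum ∅ a β = (A * (cons B L).pathSum ∅) a β -
      ∑ b, ∑ c with Fin.val c = a, A a b * B b c * L.pathSum {b.val} c β := by
  simp only [pathSum_cons_empty_apply A, pathSum_cons_singleton_apply, mul_sub,
    Finset.sum_sub_distrib, Finset.mul_sum, mul_assoc, Matrix.mul_apply]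

theorem pathSum_cons_cons_nil_empty (A : Matrix (Fin l) (Fin m) R) (B : Matrix (Fin m) (Fin n) R) :
    (cons A (cons B (nil n))).pathSum ∅ = A * B - diagonalPart (A * B) := by
  ext a β
  rw [pathSum_cons_cons_empty_apply, pathSum_cons_nil_empty, Matrix.sub_apply,
    ← Matrix.mul_one (diagonalPart (A * B)), diagonalPart_mul_mul_apply]
  rfl

theorem pathSum_cons_cons_cons_empty (A : Matrix (Fin l) (Fin m) R) (B : Matrix (Fin m) (Fin n) R)
    (C : Matrix (Fin n) (Fin p) R) (L : MatrixChain R p q) :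
    (cons A (cons B (cons C L))).pathSum ∅ =
      A * (cons B (cons C L)).pathSum ∅ - diagonalPart (A * B) * (cons C L).pathSum ∅ +
        (cons (backtrackMatrix A B C) L).pathSum ∅ := by
  ext a β
  have backtrack_eq : (cons (backtrackMatrix A B C) L).pathSum ∅ a β =
      ∑ b, ∑ c with Fin.val c = a, A a b * B b c *
        ∑ d with Fin.val d = b, C c d * L.pathSum {c.val} d β := by
    simp only [pathSum_cons_empty_apply, backtrackMatrix, Matrix.of_apply, Finset.sum_mul,
      Finset.mul_sum]
    refine (Finset.sum_comm' (s' := fun b : Fin m => {d : Fin p | Fin.val d = b})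
      (t' := Finset.univ) (by simp [eq_comm])).trans ?_
    refine Finset.sum_congr rfl fun b _ => Finset.sum_comm.trans ?_
    refine Finset.sum_congr rfl fun c hc => ?_
    simp only [(Finset.mem_filter.1 hc).2, mul_assoc]
  rw [pathSum_cons_cons_empty_apply, Matrix.add_apply, Matrix.sub_apply,
    diagonalPart_mul_mul_apply, backtrack_eq]
  simp only [pathSum_cons_singleton_apply, mul_sub, Finset.sum_sub_distrib]
  abel

end Recursion

section NormBound

/-- The list of the 2-norms of the factors of a chain of quaternion matrices. -/
def norms : {m n : ℕ} → MatrixChain ℍ[ℝ] m n → List ℝ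
  | _, _, nil _ => []
  | _, _, cons A L => quatNorm2 A :: L.norms

theorem norms_prod_nonneg : ∀ {m n : ℕ} (L : MatrixChain ℍ[ℝ] m n), 0 ≤ L.norms.prod
  | _, _, nil _ => by simp [norms]
  | _, _, cons A L => by
    rw [norms, List.prod_cons]
    exact mul_nonneg (quatNorm2_nonneg A) L.norms_prod_nonneg

theorem quatNorm2_pathSum_cons_le {l m n : ℕ} (A : Matrix (Fin l) (Fin m) ℍ[ℝ]) :
    ∀ L : MatrixChain ℍ[ℝ] m n, quatNorm2 ((cons A L).pathSum ∅) ≤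
      2 ^ L.norms.length * (cons A L).norms.prod
  | nil _ => by simp [pathSum_cons_nil_empty, norms]
  | cons B (nil _) => by
    rw [pathSum_cons_cons_nil_empty]
    simp only [norms, List.length_cons, List.length_nil, List.prod_cons, List.prod_nil,
      zero_add, pow_one, mul_one]
    have sub_le := quatNorm2_sub_le (A * B) (diagonalPart (A * B))
    have diag_le := quatNorm2_diagonalPart_le (A * B)
    have mul_le := quatNorm2_mul_le A B
    linarith
  | cons B (cons C L) => by
    have hA := quatNorm2_nonneg A
    have hB := quatNorm2_nonneg B
    have hL := L.norms_prod_nonneg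
    have free_le : quatNorm2 (A * (cons B (cons C L)).pathSum ∅) ≤
        quatNorm2 A * (2 ^ (cons C L).norms.length * (cons B (cons C L)).norms.prod) := by
      refine (quatNorm2_mul_le _ _).trans ?_
      gcongr
      exact quatNorm2_pathSum_cons_le B (cons C L)
    have return_le : quatNorm2 (diagonalPart (A * B) * (cons C L).pathSum ∅) ≤
        quatNorm2 A * quatNorm2 B * (2 ^ L.norms.length * (cons C L).norms.prod) := by
      refine (quatNorm2_mul_le _ _).trans (mul_le_mul ?_ ?_ (quatNorm2_nonneg _) (by positivity))
      · exact (quatNorm2_diagonalPart_le _).trans (quatNorm2_mul_le A B)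
      · exact quatNorm2_pathSum_cons_le C L
    have backtrack_le : quatNorm2 ((cons (backtrackMatrix A B C) L).pathSum ∅) ≤
        2 ^ L.norms.length * (quatNorm2 A * quatNorm2 B * quatNorm2 C * L.norms.prod) := by
      refine (quatNorm2_pathSum_cons_le _ L).trans ?_
      rw [norms, List.prod_cons]
      gcongr
      exact quatNorm2_backtrackMatrix_le A B C
    rw [pathSum_cons_cons_cons_empty]
    refine (quatNorm2_add_le _ _).trans <| (add_le_add ((quatNorm2_sub_le _ _).trans
      (add_le_add free_le return_le)) backtrack_le).trans_eq ?_
    simp only [norms, List.length_cons, List.prod_cons]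
    ring

end NormBound

section OfFn

variable {R : Type*}

/-- The chain of a finite family of matrices of matching dimensions. -/
def ofFn : {k : ℕ} → (dims : Fin (k + 1) → ℕ) →
    ((j : Fin k) → Matrix (Fin (dims j.castSucc)) (Fin (dims j.succ)) R) →
    MatrixChain R (dims 0) (dims (Fin.last k))
  | 0, dims, _ => nil (dims 0)
  | _ + 1, dims, H => cons (H 0) (ofFn (fun j => dims j.succ) fun j => H j.succ)

theorem norms_ofFn : ∀ {k : ℕ} (dims : Fin (k + 1) → ℕ)
    (H : (j : Fin k) → Matrix (Fin (dims j.castSucc)) (Fin (dims j.succ)) ℍ[ℝ]),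
    (ofFn dims H).norms = List.ofFn fun j => quatNorm2 (H j)
  | 0, _, _ => rfl
  | _ + 1, dims, H => by
    rw [List.ofFn_succ]
    exact congrArg (quatNorm2 (H 0) :: ·) (norms_ofFn (fun j => dims j.succ) fun j => H j.succ)

open Classical in
theorem pathSum_ofFn_apply {k : ℕ} [Semiring R] (dims : Fin (k + 1) → ℕ)
    (H : (j : Fin k) → Matrix (Fin (dims j.castSucc)) (Fin (dims j.succ)) R) (F : Finset ℕ)
    (α : Fin (dims 0)) (β : Fin (dims (Fin.last k))) :
    (ofFn dims H).pathSum F α β =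
      ∑ t : (j : Fin (k + 1)) → Fin (dims j)
        with t 0 = α ∧ t (Fin.last k) = β ∧ AdmissibleChain F t,
        (List.ofFn fun j : Fin k => H j (t j.castSucc) (t j.succ)).prod := by
  induction k generalizing F with
  | zero =>
    have admissible (t : (j : Fin 1) → Fin (dims j)) : AdmissibleChain F t :=
      ⟨fun h => by omega, fun i h => by omega⟩
    rw [sum_filter_apply_zero_eq_and, Finset.sum_filter, Fintype.sum_unique]
    simp [ofFn, pathSum, admissible, Matrix.one_apply]
  | succ k ih =>
    have head_tail : (ofFn dims H).pathSum F α β = ∑ b with Fin.val b ∉ F, H 0 α b *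
      (ofFn (fun j => dims j.succ) fun j => H j.succ).pathSum {α.val} b β := rfl
    simp only [head_tail, ih, Finset.mul_sum]
    rw [sum_filter_apply_zero_eq_and]
    refine (Finset.sum_comm' (s' := fun s => {s 0}) (t' := {s | s (Fin.last k) = β ∧
      AdmissibleChain F (Fin.cons α s : (j : Fin (k + 2)) → Fin (dims j))}) ?_).trans ?_
    · intro b s
      simp only [Finset.mem_filter, Finset.mem_univ, true_and, Finset.mem_singleton,
        admissibleChain_cons_iff]
      constructor
      · rintro ⟨hb, rfl, hβ, hs⟩
        exact ⟨rfl, hβ, hb, hs⟩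
      · rintro ⟨rfl, hβ, hb, hs⟩
        exact ⟨hb, rfl, hβ, hs⟩
    · simp only [Finset.sum_singleton, List.ofFn_succ, List.prod_cons]
      rfl

theorem diamond_eq_pathSum_ofFn {k : ℕ} (dims : Fin (k + 1) → ℕ)
    (H : (j : Fin k) → Matrix (Fin (dims j.castSucc)) (Fin (dims j.succ)) ℍ[ℝ]) :
    diamond dims H = (ofFn dims H).pathSum ∅ := by
  refine Matrix.ext fun α β => ?_
  rw [pathSum_ofFn_apply]
  simp only [diamond, AdmissibleChain, Finset.notMem_empty, not_false_eq_true,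
    implies_true, true_and]

end OfFn

end MatrixChain

theorem diamond_norm_le_general {k : ℕ} (dims : Fin (k + 2) → ℕ)
    (H : (j : Fin (k + 1)) → Matrix (Fin (dims j.castSucc)) (Fin (dims j.succ)) ℍ[ℝ]) :
    quatNorm2 (diamond dims H) ≤ 2 ^ k * ∏ j, quatNorm2 (H j) := by
  rw [MatrixChain.diamond_eq_pathSum_ofFn]
  have pathSum_le := MatrixChain.quatNorm2_pathSum_cons_le (H 0)
    (MatrixChain.ofFn (fun j => dims j.succ) fun j => H j.succ)
  rw [MatrixChain.norms, MatrixChain.norms_ofFn, List.length_ofFn, List.prod_cons,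
    List.prod_ofFn] at pathSum_le
  rwa [Fin.prod_univ_succ]

/-- **Lemma 3.8.** For `k` quaternion matrices `H₁,…,H_k`, with `H j` of dimensions
`n_j × n_{j+1}`, the diamond product satisfies
`‖H₁ ⋄ ⋯ ⋄ H_k‖₂ ≤ 3^{k−1} ‖H₁‖₂ ⋯ ‖H_k‖₂`. -/
theorem diamond_norm_le {k : ℕ} (hk : 1 ≤ k) (dims : Fin (k + 1) → ℕ)
    (H : (j : Fin k) → Matrix (Fin (dims j.castSucc)) (Fin (dims j.succ)) ℍ[ℝ]) :
    quatNorm2 (diamond dims H) ≤ 3 ^ (k - 1) * ∏ j : Fin k, quatNorm2 (H j) := by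
  obtain ⟨k, rfl⟩ := Nat.exists_eq_add_of_le' hk
  exact (diamond_norm_le_general dims H).trans <| mul_le_mul_of_nonneg_right
    (pow_le_pow_left₀ zero_le_two (by norm_num) k)
    (Finset.prod_nonneg fun j _ => quatNorm2_nonneg (H j))

end
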